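/- The cardinality of the set 𝓔(X) of ends of X equals the supremum, over all compact subsets K ⊆ X, of the number n(K) of ends of X relative to K; in particular, 𝓔(X) is finite with cardinality sup_K n(K) whenever this supremum is finite, and 𝓔(X) is infinite otherwise. -/

import Mathlib

open Set Topology

/-- `E` is a connected component of the set `S` in `X`. -/
def IsCCIn {X : Type*} [TopologicalSpace X] (S E : Set X) : Prop :=
  ∃ x ∈ S, E = connectedComponentIn S x

/-- `E` is an end of `X` relative to the compact set `K`: a connected component of
`X \ K` that is not relatively compact. -/
def IsRelEnd {X : Type*} [TopologicalSpace X] (K E : Set X) : Prop :=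
  IsCCIn Kᶜ E ∧ ¬ IsCompact (closure E)

/-- The set `𝓔(K, X)` of ends of `X` relative to the compact set `K`. -/
def relEnds {X : Type*} [TopologicalSpace X] (K : Set X) : Set (Set X) :=
  {E | IsRelEnd K E}

/-- The set `𝓔(X)` of ends of `X`: functions assigning to each compact subset `K` of `X`
a connected component of `X \ K`, such that `𝖤(H) ⊆ 𝖤(K)` whenever `K ⊆ H`. -/
def Ends (X : Type*) [TopologicalSpace X] : Set ({K : Set X // IsCompact K} → Set X) :=
  {E | (∀ K : {K : Set X // IsCompact K}, IsCCIn (K : Set X)ᶜ (E K)) ∧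
       ∀ K H : {K : Set X // IsCompact K}, (K : Set X) ⊆ (H : Set X) → E H ⊆ E K}

/-!
An ultrafilter `U` on `X` that contains the complement of every compact set and some connected
component `Y` of `X` singles out an end. Indeed, let `K` be compact and let `V` be a relatively
compact open neighbourhood of `K` that meets `Y`. Every component of `Y \ K` that leaves `V` crosses
the compact set `frontier V`, so only finitely many components do, and one of them belongs to `U`.
A component of `X \ K` that is not relatively compact belongs to such an ultrafilter, hence it is
the value at `K` of an end; so `𝓔(K, X)` is the image of `𝓔(X)` under evaluation at `K`. Finally,
ends that agree at a compact set agree at all smaller ones, so finitely many distinct ends already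
differ at a single compact set, and counting the images of the evaluations counts the ends.
-/

open Filter Function

section

variable {ι : Type*} {α : ι → Type*} [Preorder ι] [IsDirectedOrder ι] [Nonempty ι]
  {s : Set (∀ i, α i)}

theorem exists_injOn_eval_of_finite (hs : s.Finite)
    (hdet : ∀ E ∈ s, ∀ F ∈ s, ∀ ⦃i j⦄, i ≤ j → E j = F j → E i = F i) :
    ∃ j, InjOn (eval j) s := by
  have hsep (p : (∀ i, α i) × (∀ i, α i)) : ∃ i, p.1 i = p.2 i → p.1 = p.2 := by
    by_contra! h
    exact (h (Classical.arbitrary ι)).2 (funext fun i => (h i).1)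
  choose i hi using hsep
  obtain ⟨j, hj⟩ := ((hs.prod hs).image i).bddAbove
  exact ⟨j, fun E hE F hF hEF =>
    hi (E, F) (hdet E hE F hF (hj (mem_image_of_mem i (mk_mem_prod hE hF))) hEF)⟩

theorem encard_eq_iSup_encard_image_eval
    (hdet : ∀ E ∈ s, ∀ F ∈ s, ∀ ⦃i j⦄, i ≤ j → E j = F j → E i = F i) :
    s.encard = ⨆ i, (eval i '' s).encard := by
  refine le_antisymm (ENat.forall_natCast_le_iff_le.1 fun n hn => ?_)
    (iSup_le fun i => encard_image_le _ _)
  obtain ⟨t, hts, htn⟩ := exists_subset_encard_eq hn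
  obtain ⟨j, hj⟩ := exists_injOn_eval_of_finite (finite_of_encard_eq_coe htn)
    fun E hE F hF => hdet E (hts hE) F (hts hF)
  calc (n : ℕ∞) = (eval j '' t).encard := by rw [hj.encard_image, htn]
    _ ≤ (eval j '' s).encard := encard_le_encard (image_mono hts)
    _ ≤ ⨆ i, (eval i '' s).encard := le_iSup (fun i => (eval i '' s).encard) j

end

section

variable {X : Type*} [TopologicalSpace X] {S C D K V : Set X} {x : X}

namespace IsCCIn

theorem nonempty (hC : IsCCIn S C) : C.Nonempty := by
  obtain ⟨x, hx, rfl⟩ := hC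
  exact ⟨x, mem_connectedComponentIn hx⟩

theorem subset (hC : IsCCIn S C) : C ⊆ S := by
  obtain ⟨x, -, rfl⟩ := hC
  exact connectedComponentIn_subset S x

theorem isPreconnected (hC : IsCCIn S C) : IsPreconnected C := by
  obtain ⟨x, -, rfl⟩ := hC
  exact isPreconnected_connectedComponentIn

theorem subset_of_isPreconnected (hC : IsCCIn S C) (hD : IsPreconnected D) (hDS : D ⊆ S)
    (hCD : (C ∩ D).Nonempty) : D ⊆ C := by
  obtain ⟨x, -, rfl⟩ := hC
  obtain ⟨y, hyC, hyD⟩ := hCD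
  rw [connectedComponentIn_eq hyC]
  exact hD.subset_connectedComponentIn hyD hDS

theorem eq_of_inter_nonempty (hC : IsCCIn S C) (hD : IsCCIn S D) (hCD : (C ∩ D).Nonempty) :
    C = D :=
  (hD.subset_of_isPreconnected hC.isPreconnected hC.subset (inter_comm C D ▸ hCD)).antisymm
    (hC.subset_of_isPreconnected hD.isPreconnected hD.subset hCD)

end IsCCIn

theorem inter_frontier_nonempty_of_isPreconnected (hC : IsPreconnected C)
    (hCV : (C ∩ V).Nonempty) (hCV' : (C ∩ Vᶜ).Nonempty) : (C ∩ frontier V).Nonempty := by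
  by_contra hne
  have hfr : ∀ z ∈ C, z ∈ closure V → z ∈ interior V := fun z hzC hzV =>
    by_contra fun hz => hne ⟨z, hzC, hzV, hz⟩
  obtain ⟨x, hxC, hxV⟩ := hCV
  obtain ⟨y, hyC, hyV⟩ := hCV'
  have hsub : C ⊆ interior V := hC.subset_of_closure_inter_subset isOpen_interior
    ⟨x, hxC, hfr x hxC (subset_closure hxV)⟩
    fun z hz => hfr z hz.2 (closure_mono interior_subset hz.1)
  exact hyV (interior_subset (hsub hyC))

theorem frontier_connectedComponentIn_subset_compl [LocallyConnectedSpace X] (hS : IsOpen S) :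
    frontier (connectedComponentIn S x) ⊆ Sᶜ := by
  intro z hz hzS
  obtain ⟨w, hwz, hwx⟩ :=
    mem_closure_iff.1 hz.1 _ (hS.connectedComponentIn (x := z)) (mem_connectedComponentIn hzS)
  apply hz.2
  rw [hS.connectedComponentIn.interior_eq, connectedComponentIn_eq hwx,
    ← connectedComponentIn_eq hwz]
  exact mem_connectedComponentIn hzS

theorem connectedComponentIn_compl_inter_nonempty [LocallyConnectedSpace X] (hK : IsClosed K)
    (hV : IsOpen V) (hKV : K ⊆ V) (hx : x ∉ K) (hxV : (connectedComponent x ∩ V).Nonempty) :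
    (connectedComponentIn Kᶜ x ∩ V).Nonempty := by
  by_contra hne
  have hdisj : Disjoint (connectedComponentIn Kᶜ x) V :=
    disjoint_iff_inter_eq_empty.2 (not_nonempty_iff_eq_empty.1 hne)
  have hfr : frontier (connectedComponentIn Kᶜ x) = ∅ := by
    refine eq_empty_of_forall_notMem fun z hz => ?_
    have hzK : z ∈ K := not_not.1 (frontier_connectedComponentIn_subset_compl hK.isOpen_compl hz)
    exact (hdisj.closure_left hV).notMem_of_mem_left hz.1 (hKV hzK)
  have hsub : connectedComponent x ⊆ connectedComponentIn Kᶜ x :=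
    (isClopen_iff_frontier_eq_empty.2 hfr).connectedComponent_subset (mem_connectedComponentIn hx)
  exact hne (hxV.mono (inter_subset_inter_left V hsub))

section

variable [R1Space X]

theorem exists_finite_isCCIn_compl_cover [WeaklyLocallyCompactSpace X] [LocallyConnectedSpace X]
    (hK : IsCompact K) (hK' : IsClosed K) (x : X) :
    ∃ L, IsCompact L ∧ ∃ 𝒞 : Set (Set X), 𝒞.Finite ∧ (∀ C ∈ 𝒞, IsCCIn Kᶜ C) ∧
      connectedComponent x \ L ⊆ ⋃₀ 𝒞 := by
  -- With `x ∈ V`, no component of `Kᶜ` avoiding `V` can be all of `connectedComponent x`.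
  obtain ⟨V, hV, hKV, hVc⟩ := exists_isOpen_superset_and_isCompact_closure (hK.insert x)
  obtain ⟨hxV, hKV⟩ := insert_subset_iff.1 hKV
  have hfrK : frontier V ⊆ Kᶜ := fun z hz hzK => (hV.frontier_eq ▸ hz).2 (hKV hzK)
  have hfrc : IsCompact (frontier V) :=
    hVc.of_isClosed_subset isClosed_frontier frontier_subset_closure
  obtain ⟨t, ht, htc⟩ := hfrc.elim_nhds_subcover (connectedComponentIn Kᶜ) fun z hz =>
    connectedComponentIn_mem_nhds (hK'.isOpen_compl.mem_nhds (hfrK hz))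
  refine ⟨closure V, hVc, connectedComponentIn Kᶜ '' t, t.finite_toSet.image _,
    forall_mem_image.2 fun z hz => ⟨z, hfrK (ht z hz), rfl⟩, fun y ⟨hyx, hyV⟩ => ?_⟩
  have hyV' : y ∉ V := fun hy => hyV (subset_closure hy)
  have hyK : y ∉ K := fun hy => hyV' (hKV hy)
  have hmeet : (connectedComponentIn Kᶜ y ∩ V).Nonempty :=
    connectedComponentIn_compl_inter_nonempty hK' hV hKV hyK
      ⟨x, connectedComponent_eq hyx ▸ mem_connectedComponent, hxV⟩
  obtain ⟨z, hzy, hzV⟩ := inter_frontier_nonempty_of_isPreconnected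
    isPreconnected_connectedComponentIn hmeet ⟨y, mem_connectedComponentIn hyK, hyV'⟩
  obtain ⟨w, hwt, hzw⟩ := mem_iUnion₂.1 (htc hzV)
  refine ⟨_, mem_image_of_mem _ hwt, ?_⟩
  rw [connectedComponentIn_eq hzw, ← connectedComponentIn_eq hzy]
  exact mem_connectedComponentIn hyK

theorem exists_isCCIn_compl_mem_ultrafilter [WeaklyLocallyCompactSpace X]
    [LocallyConnectedSpace X] (hK : IsCompact K) {U : Ultrafilter X} (hU : ↑U ≤ cocompact X)
    (hxU : connectedComponent x ∈ U) : ∃ C, IsCCIn Kᶜ C ∧ C ∈ U := by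
  obtain ⟨L, hL, 𝒞, hfin, h𝒞, hcover⟩ :=
    exists_finite_isCCIn_compl_cover hK.closure isClosed_closure x
  have hmem : ⋃₀ 𝒞 ∈ U := mem_of_superset (inter_mem hxU (hU hL.compl_mem_cocompact)) hcover
  obtain ⟨C, hC, hCU⟩ := (Ultrafilter.finite_sUnion_mem_iff hfin).1 hmem
  obtain ⟨y, hy, rfl⟩ := h𝒞 C hC
  have hKK : (closure K)ᶜ ⊆ Kᶜ := compl_subset_compl.2 subset_closure
  exact ⟨connectedComponentIn Kᶜ y, ⟨y, hKK hy, rfl⟩,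
    mem_of_superset hCU (connectedComponentIn_mono y hKK)⟩

theorem exists_mem_Ends_forall_mem_ultrafilter [WeaklyLocallyCompactSpace X]
    [LocallyConnectedSpace X] {U : Ultrafilter X} (hU : ↑U ≤ cocompact X)
    (hxU : connectedComponent x ∈ U) : ∃ E ∈ Ends X, ∀ K, E K ∈ U := by
  choose E hE hEU using fun K : {K : Set X // IsCompact K} =>
    exists_isCCIn_compl_mem_ultrafilter K.2 hU hxU
  refine ⟨E, ⟨hE, fun K H hKH => ?_⟩, hEU⟩
  exact (hE K).subset_of_isPreconnected (hE H).isPreconnected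
    ((hE H).subset.trans (compl_subset_compl.2 hKH))
    (U.nonempty_of_mem (inter_mem (hEU K) (hEU H)))

theorem exists_ultrafilter_le_cocompact_of_not_isCompact_closure (hC : ¬IsCompact (closure C)) :
    ∃ U : Ultrafilter X, ↑U ≤ cocompact X ∧ C ∈ U := by
  have hne : (cocompact X ⊓ 𝓟 C).NeBot := by
    refine (hasBasis_cocompact.inf_principal_neBot_iff).2 fun {L} hL => ?_
    rw [inter_comm, ← sdiff_eq, sdiff_nonempty]
    exact fun hCL => hC (hL.closure_of_subset hCL)
  obtain ⟨U, hU⟩ := Ultrafilter.exists_le (cocompact X ⊓ 𝓟 C)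
  exact ⟨U, hU.trans inf_le_left, le_principal_iff.1 (hU.trans inf_le_right)⟩

end

instance isDirectedOrder_isCompact : IsDirectedOrder {K : Set X // IsCompact K} :=
  ⟨fun K H => ⟨⟨K ∪ H, K.2.union H.2⟩, subset_union_left, subset_union_right⟩⟩

instance nonempty_isCompact : Nonempty {K : Set X // IsCompact K} :=
  ⟨⟨∅, isCompact_empty⟩⟩

namespace Ends

variable {E F : {K : Set X // IsCompact K} → Set X}

theorem apply_mem_relEnds (hE : E ∈ Ends X) (K : {K : Set X // IsCompact K}) :
    E K ∈ relEnds (K : Set X) := by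
  refine ⟨hE.1 K, fun hc => ?_⟩
  obtain ⟨x, hx⟩ := (hE.1 ⟨K ∪ closure (E K), K.2.union hc⟩).nonempty
  exact (hE.1 _).subset hx (Or.inr (subset_closure (hE.2 K _ subset_union_left hx)))

theorem apply_eq_of_le (hE : E ∈ Ends X) (hF : F ∈ Ends X) {K H : {K : Set X // IsCompact K}}
    (hKH : K ≤ H) (hEF : E H = F H) : E K = F K := by
  obtain ⟨x, hx⟩ := (hE.1 H).nonempty
  exact (hE.1 K).eq_of_inter_nonempty (hF.1 K) ⟨x, hE.2 K H hKH hx, hF.2 K H hKH (hEF ▸ hx)⟩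

theorem image_eval_eq_relEnds [R1Space X] [WeaklyLocallyCompactSpace X] [LocallyConnectedSpace X]
    (K : {K : Set X // IsCompact K}) : eval K '' Ends X = relEnds (K : Set X) := by
  refine Subset.antisymm (image_subset_iff.2 fun E hE => apply_mem_relEnds hE K) fun C hC => ?_
  obtain ⟨U, hU, hCU⟩ := exists_ultrafilter_le_cocompact_of_not_isCompact_closure hC.2
  obtain ⟨x, hx⟩ := hC.1.nonempty
  have hxU : connectedComponent x ∈ U :=
    mem_of_superset hCU (hC.1.isPreconnected.subset_connectedComponent hx)
  obtain ⟨E, hE, hEU⟩ := exists_mem_Ends_forall_mem_ultrafilter hU hxU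
  exact ⟨E, hE, (hE.1 K).eq_of_inter_nonempty hC.1 (U.nonempty_of_mem (inter_mem (hEU K) hCU))⟩

end Ends

end

theorem card_ends_eq_sup_relEnds_card_general {X : Type*} [TopologicalSpace X] [R1Space X]
    [WeaklyLocallyCompactSpace X] [LocallyConnectedSpace X] :
    (Ends X).encard = ⨆ K : {K : Set X // IsCompact K}, (relEnds (K : Set X)).encard :=
  calc (Ends X).encard = ⨆ K, (eval K '' Ends X).encard :=
        encard_eq_iSup_encard_image_eval fun _ hE _ hF _ _ => Ends.apply_eq_of_le hE hF
    _ = ⨆ K : {K : Set X // IsCompact K}, (relEnds (K : Set X)).encard :=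
        iSup_congr fun K => by rw [Ends.image_eval_eq_relEnds]

/-- The cardinality of the set of ends of X equals the supremum over all compact K of the
number of ends of X relative to K (as extended natural numbers, covering both the finite
and the infinite case). -/
theorem card_ends_eq_sup_relEnds_card {X : Type*} [TopologicalSpace X] [Nonempty X] [ConnectedSpace X]
    [LocallyCompactSpace X] [LocallyConnectedSpace X] [SigmaCompactSpace X] [T2Space X] :
    (Ends X).encard = ⨆ K : {K : Set X // IsCompact K}, (relEnds (K : Set X)).encard :=
  card_ends_eq_sup_relEnds_card_general
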